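/- Let R be a commutative ring in which 2 is invertible, and let n ≥ 2. Every matrix in UT_n(R) (n×n unitriangular matrices over R) is a product of at most two commutators of involutions: A = [B₁,C₁]·[B₂,C₂] with B₁,C₁,B₂,C₂ upper triangular matrices satisfying Bⱼ² = Cⱼ² = I. -/

import Mathlib

open Matrix

/-- unitriangular with superdiagonal s -/
def UTs {R : Type*} [CommRing R] {n : ℕ} (M : Matrix (Fin n) (Fin n) R) (s : Fin n → R) : Prop :=
  (∀ i j, j < i → M i j = 0) ∧ (∀ i, M i i = 1) ∧ ∀ i j : Fin n, (i : ℕ) + 1 = j → M i j = s i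

section
variable {R : Type*} [CommRing R] {n : ℕ}

lemma ut_mul_diag {M N : Matrix (Fin n) (Fin n) R} (hM : ∀ i j, j < i → M i j = 0)
    (hN : ∀ i j, j < i → N i j = 0) (i : Fin n) : (M * N) i i = M i i * N i i := by
  rw [Matrix.mul_apply, Finset.sum_eq_single i]
  · intro l _ hl
    rcases lt_or_gt_of_ne hl with h | h
    · rw [hM _ _ h, zero_mul]
    · rw [hN _ _ h, mul_zero]
  · simp

lemma ut_mul_super {M N : Matrix (Fin n) (Fin n) R} (hM : ∀ i j, j < i → M i j = 0)
    (hN : ∀ i j, j < i → N i j = 0) (i j : Fin n) (hij : (i : ℕ) + 1 = j) :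
    (M * N) i j = M i i * N i j + M i j * N j j := by
  have hne : i ≠ j := by rintro rfl; omega
  rw [Matrix.mul_apply, ← Finset.sum_pair (f := fun l => M i l * N l j) hne]
  symm
  apply Finset.sum_subset (Finset.subset_univ _)
  intro l _ hl
  simp only [Finset.mem_insert, Finset.mem_singleton, not_or] at hl
  rcases lt_or_gt_of_ne hl.1 with h | h
  · rw [hM _ _ h, zero_mul]
  · rw [hN l j, mul_zero]
    have h1 : (l : ℕ) ≠ j := fun h => hl.2 (Fin.ext h)
    rw [Fin.lt_def] at *
    omega

lemma UTs.bt {M : Matrix (Fin n) (Fin n) R} {s} (h : UTs M s) : M.BlockTriangular id :=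
  fun i j hij => h.1 i j hij

lemma UTs.det {M : Matrix (Fin n) (Fin n) R} {s} (h : UTs M s) : IsUnit M.det := by
  rw [Matrix.det_of_upperTriangular h.bt]
  simp [h.2.1]

lemma UTs.mul {M N : Matrix (Fin n) (Fin n) R} {s t} (hM : UTs M s) (hN : UTs N t) :
    UTs (M * N) (s + t) := by
  refine ⟨fun i j hij => (hM.bt.mul hN.bt) hij, fun i => ?_, fun i j hij => ?_⟩
  · rw [ut_mul_diag hM.1 hN.1, hM.2.1, hN.2.1, one_mul]
  · rw [ut_mul_super hM.1 hN.1 i j hij, hM.2.1, hN.2.1, hM.2.2 i j hij, hN.2.2 i j hij]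
    simp [add_comm]

lemma bt_inv {M : Matrix (Fin n) (Fin n) R} (h : M.BlockTriangular id) (hd : IsUnit M.det) :
    M⁻¹.BlockTriangular id := by
  have : Invertible M := Matrix.invertibleOfIsUnitDet M hd
  exact Matrix.blockTriangular_inv_of_blockTriangular h

lemma UTs.inv {M : Matrix (Fin n) (Fin n) R} {s} (hM : UTs M s) : UTs M⁻¹ (-s) := by
  have hb : ∀ i j, j < i → M⁻¹ i j = 0 := fun i j hij => bt_inv hM.bt hM.det hij
  have e : M⁻¹ * M = 1 := Matrix.nonsing_inv_mul _ hM.det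
  have hd : ∀ i, M⁻¹ i i = 1 := fun i => by
    have := ut_mul_diag hb hM.1 i
    rw [e, hM.2.1] at this
    simpa using this.symm
  refine ⟨hb, hd, fun i j hij => ?_⟩
  have hne : i ≠ j := by rintro rfl; omega
  have := ut_mul_super hb hM.1 i j hij
  rw [e, hM.2.1, hd, hM.2.2 i j hij, Matrix.one_apply_ne hne] at this
  simp only [one_mul, mul_one, Pi.neg_apply] at *
  linear_combination -this

def supd (k : Fin n → R) : Matrix (Fin n) (Fin n) R :=
  Matrix.of fun i j => if (i : ℕ) + 1 = j then k i else 0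

lemma one_add_supd (k : Fin n → R) : UTs (1 + supd k) k := by
  refine ⟨fun i j hij => ?_, fun i => ?_, fun i j hij => ?_⟩
  · rw [Fin.lt_def] at hij
    have h2 : ¬ ((i : ℕ) + 1 = j) := by omega
    have h1 : i ≠ j := by rintro rfl; omega
    simp [supd, h1, h2]
  · simp [supd]
  · have h1 : i ≠ j := by rintro rfl; omega
    simp [supd, h1, hij]

lemma one_sub_supd (k : Fin n → R) : UTs (1 - supd k) (-k) := by
  have h := one_add_supd (-k)
  have : supd (-k) = - supd k := by
    ext i j; simp only [supd, Matrix.of_apply, Matrix.neg_apply]; split_ifs <;> simp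
  rwa [this, ← sub_eq_add_neg] at h

def sgn (R : Type*) [CommRing R] (n : ℕ) : Matrix (Fin n) (Fin n) R :=
  Matrix.diagonal fun i => (-1) ^ (i : ℕ)

lemma sgn_sq : sgn R n * sgn R n = 1 := by
  simp only [sgn, Matrix.diagonal_mul_diagonal]
  rw [← Matrix.diagonal_one]
  congr 1
  funext i
  rw [← mul_pow]; simp

lemma sgn_supd (k : Fin n → R) : sgn R n * supd k = - (supd k * sgn R n) := by
  ext i j
  simp only [sgn, Matrix.diagonal_mul, Matrix.neg_apply, Matrix.mul_diagonal, supd, Matrix.of_apply]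
  split_ifs with h
  · rw [← h, pow_succ]; ring
  · simp

/-- A matrix P inverted by `sgn`, with superdiagonal 2k. -/
lemma exists_P (k : Fin n → R) : ∃ P : Matrix (Fin n) (Fin n) R, UTs P (k + k) ∧
    (sgn R n * P) * (sgn R n * P) = 1 := by
  have hs := one_sub_supd k
  refine ⟨(1 + supd k) * (1 - supd k)⁻¹, ?_, ?_⟩
  · have := (one_add_supd k).mul hs.inv
    rwa [neg_neg] at this
  · have e : (1 - supd k)⁻¹ * (1 - supd k) = 1 := Matrix.nonsing_inv_mul _ hs.det
    have e' : (1 - supd k) * (1 - supd k)⁻¹ = 1 := Matrix.mul_nonsing_inv _ hs.det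
    have c : sgn R n * (1 + supd k) = (1 - supd k) * sgn R n := by
      rw [mul_add, sub_mul, sgn_supd]; simp [sub_eq_add_neg]
    generalize (1 - supd k)⁻¹ = V at *
    generalize (1 - supd k) = W at *
    calc sgn R n * ((1 + supd k) * V) * (sgn R n * ((1 + supd k) * V))
        = (sgn R n * (1 + supd k)) * V * (sgn R n * (1 + supd k)) * V := by
          simp only [mul_assoc]
      _ = W * sgn R n * (V * W) * sgn R n * V := by rw [c]; simp only [mul_assoc]
      _ = W * (sgn R n * sgn R n) * V := by rw [e]; simp only [mul_assoc, one_mul]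
      _ = 1 := by rw [sgn_sq, mul_one, e']

lemma pow_strict {N : Matrix (Fin n) (Fin n) R} (h0 : ∀ i j, j ≤ i → N i j = 0)
    (h1 : ∀ i j : Fin n, (i : ℕ) + 1 = j → N i j = 1) (k : ℕ) :
    (∀ i j : Fin n, (j : ℕ) < i + k → (N ^ k) i j = 0) ∧
    (∀ i j : Fin n, (j : ℕ) = i + k → (N ^ k) i j = 1) := by
  induction k with
  | zero =>
    refine ⟨fun i j h => ?_, fun i j h => ?_⟩
    · have : i ≠ j := by rintro rfl; omega
      simp [this]
    · have : i = j := Fin.ext (by omega)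
      simp [this]
  | succ k ih =>
    refine ⟨fun i j h => ?_, fun i j h => ?_⟩
    · rw [pow_succ', Matrix.mul_apply]
      apply Finset.sum_eq_zero
      intro l _
      by_cases hl : l ≤ i
      · rw [h0 _ _ hl, zero_mul]
      · rw [ih.1 l j, mul_zero]
        rw [not_le, Fin.lt_def] at hl
        omega
    · rw [pow_succ', Matrix.mul_apply]
      have hlt : (i : ℕ) + 1 < n := by have := j.2; omega
      rw [Finset.sum_eq_single (⟨i + 1, hlt⟩ : Fin n)]
      · rw [h1 _ _ rfl, ih.2 _ _ (by simp only; omega), one_mul]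
      · intro l _ hl
        by_cases hl2 : l ≤ i
        · rw [h0 _ _ hl2, zero_mul]
        · rw [ih.1 l j, mul_zero]
          have : (l : ℕ) ≠ i + 1 := fun h => hl (Fin.ext h)
          rw [not_le, Fin.lt_def] at hl2
          omega
      · simp

lemma conj_shift (hn : 0 < n) {Y : Matrix (Fin n) (Fin n) R} (hY : UTs Y 1) :
    ∃ U : Matrix (Fin n) (Fin n) R, U.BlockTriangular id ∧ IsUnit U.det ∧
      Y * U = U * (1 + supd 1) := by
  have hp := pow_strict (N := Y - 1) (fun i j h => by
      rcases h.lt_or_eq with h | h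
      · simp [hY.1 _ _ h, Matrix.one_apply_ne h.ne']
      · simp [h, hY.2.1])
    (fun i j h => by
      have h1 : i ≠ j := by rintro rfl; omega
      simp [hY.2.2 _ _ h, h1])
  let last : Fin n := ⟨n - 1, by omega⟩
  let U : Matrix (Fin n) (Fin n) R := Matrix.of fun i j => ((Y - 1) ^ (n - 1 - (j : ℕ))) i last
  have hb : U.BlockTriangular id := by
    intro i j hij
    have hij : (j : ℕ) < i := hij
    apply (hp _).1
    have := i.2
    simp only [last]
    omega
  refine ⟨U, hb, ?_, ?_⟩
  · rw [Matrix.det_of_upperTriangular hb]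
    have : ∀ i, U i i = 1 := fun i => (hp _).2 _ _ (by have := i.2; simp only [last]; omega)
    simp [this]
  · suffices h : (Y - 1) * U = U * supd 1 by
      rw [mul_add, ← h, sub_mul]; simp
    ext i j
    have e1 : ((Y - 1) * U) i j = ((Y - 1) ^ (n - 1 - (j : ℕ) + 1)) i last := by
      rw [pow_succ', Matrix.mul_apply, Matrix.mul_apply]; rfl
    rw [e1, Matrix.mul_apply]
    have hj := j.2
    rcases Nat.eq_zero_or_pos (j : ℕ) with h | h
    · rw [(hp _).1 _ _ (by simp only [last]; omega)]
      symm
      apply Finset.sum_eq_zero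
      intro l _
      simp [supd, h]
    · rw [Finset.sum_eq_single (⟨j - 1, by omega⟩ : Fin n)]
      · have : (j : ℕ) - 1 + 1 = j := by omega
        simp only [U, supd, Matrix.of_apply, this, if_true, Pi.one_apply, mul_one]
        have hh : n - 1 - (j : ℕ) + 1 = n - 1 - ((j : ℕ) - 1) := by omega
        rw [hh]
      · intro l _ hl
        have : ¬ ((l : ℕ) + 1 = j) := fun h => hl (Fin.ext (by simp only; omega))
        simp [supd, this]
      · simp

lemma exists_conj (hn : 0 < n) {Y Z : Matrix (Fin n) (Fin n) R} (hY : UTs Y 1) (hZ : UTs Z 1) :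
    ∃ U V : Matrix (Fin n) (Fin n) R, U.BlockTriangular id ∧ V.BlockTriangular id ∧
      V * U = 1 ∧ Y = U * Z * V := by
  obtain ⟨U, hU, hUd, eU⟩ := conj_shift hn hY
  obtain ⟨W, hW, hWd, eW⟩ := conj_shift hn hZ
  have u1 := Matrix.nonsing_inv_mul _ hUd
  have u2 := Matrix.mul_nonsing_inv _ hUd
  have w1 := Matrix.nonsing_inv_mul _ hWd
  have w2 := Matrix.mul_nonsing_inv _ hWd
  have hU' := bt_inv hU hUd
  have hW' := bt_inv hW hWd
  generalize U⁻¹ = U' at *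
  generalize W⁻¹ = W' at *
  refine ⟨U * W', W * U', hU.mul hW', hW.mul hU', ?_, ?_⟩
  · calc W * U' * (U * W') = W * (U' * U) * W' := by simp only [mul_assoc]
      _ = 1 := by rw [u1, mul_one, w2]
  · calc Y = Y * U * U' := by rw [mul_assoc, u2, mul_one]
      _ = U * (W' * W) * (1 + supd 1) * U' := by rw [eU, w1, mul_one]
      _ = U * W' * (W * (1 + supd 1)) * U' := by simp only [mul_assoc]
      _ = _ := by rw [← eW]; simp only [mul_assoc]

lemma sgn_bt : (sgn R n).BlockTriangular id := Matrix.blockTriangular_diagonal _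

end

theorem stmt_13 {R : Type*} [CommRing R] [Invertible (2 : R)] (n : ℕ) (hn : 2 ≤ n)
    (A : Matrix (Fin n) (Fin n) R)
    (hAut : A.BlockTriangular id) (hAdiag : ∀ i, A i i = 1) :
    ∃ B₁ C₁ B₂ C₂ : Matrix (Fin n) (Fin n) R,
      B₁ * B₁ = 1 ∧ C₁ * C₁ = 1 ∧ B₂ * B₂ = 1 ∧ C₂ * C₂ = 1 ∧
      B₁.BlockTriangular id ∧ C₁.BlockTriangular id ∧
      B₂.BlockTriangular id ∧ C₂.BlockTriangular id ∧
      A = (B₁ * C₁ * B₁⁻¹ * C₁⁻¹) * (B₂ * C₂ * B₂⁻¹ * C₂⁻¹) := by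
  let s : Fin n → R := fun i => if h : (i : ℕ) + 1 < n then A i ⟨i + 1, h⟩ else 0
  have hA : UTs A s := by
    refine ⟨fun i j h => hAut h, hAdiag, fun i j h => ?_⟩
    have h' : (i : ℕ) + 1 < n := by have := j.2; omega
    have : j = ⟨i + 1, h'⟩ := Fin.ext h.symm
    simp [s, h', this]
  have two : (2 : R) * ⅟2 = 1 := mul_invOf_self 2
  obtain ⟨P, hP, eP⟩ := exists_P (fun i => ⅟2 * ⅟2 * (s i - 1))
  obtain ⟨Q, hQ, eQ⟩ := exists_P (fun _ : Fin n => (⅟2 * ⅟2 : R))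
  have hZ : UTs (Q * Q) 1 := by
    convert hQ.mul hQ using 1
    funext i
    simp only [Pi.add_apply, Pi.one_apply]
    linear_combination (-1 - 2 * ⅟(2 : R)) * two
  have hPP := hP.mul hP
  have hY : UTs ((P * P)⁻¹ * A) 1 := by
    convert hPP.inv.mul hA using 1
    funext i
    simp only [Pi.add_apply, Pi.one_apply, Pi.neg_apply]
    linear_combination (s i - 1) * (1 + 2 * ⅟(2 : R)) * two
  obtain ⟨U, V, hU, hV, hVU, e⟩ := exists_conj (by omega) hY hZ
  have eA : A = P * P * (U * (Q * Q) * V) := by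
    rw [← e, ← mul_assoc, Matrix.mul_nonsing_inv _ hPP.det, one_mul]
  have S := sgn_sq (R := R) (n := n)
  have cj : ∀ X Y : Matrix (Fin n) (Fin n) R, U * X * V * (U * Y * V) = U * (X * Y) * V := by
    intro X Y
    calc U * X * V * (U * Y * V) = U * X * (V * U) * Y * V := by simp only [mul_assoc]
      _ = _ := by rw [hVU]; simp only [mul_assoc, one_mul]
  have hUV : U * V = 1 := mul_eq_one_comm.mp hVU
  have i1 : (U * sgn R n * V) * (U * sgn R n * V) = 1 := by rw [cj, S, mul_one, hUV]
  have i2 : (U * (sgn R n * Q) * V) * (U * (sgn R n * Q) * V) = 1 := by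
    rw [cj, eQ, mul_one, hUV]
  refine ⟨sgn R n, sgn R n * P, U * sgn R n * V, U * (sgn R n * Q) * V, S, eP, i1, i2,
    sgn_bt, sgn_bt.mul hP.bt, (hU.mul sgn_bt).mul hV, (hU.mul (sgn_bt.mul hQ.bt)).mul hV, ?_⟩
  have c : ∀ X : Matrix (Fin n) (Fin n) R, sgn R n * (sgn R n * X) = X := fun X => by
    rw [← mul_assoc, S, one_mul]
  rw [Matrix.inv_eq_left_inv S, Matrix.inv_eq_left_inv eP, Matrix.inv_eq_left_inv i1,
    Matrix.inv_eq_left_inv i2, cj, cj, cj, c, c, eA]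
  rw [mul_assoc P (sgn R n), c, mul_assoc Q (sgn R n), c]
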